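/- (Pointwise convergence, square-summed bound.) Let (λ_k, z_k, z̃_k, ε_k) be NE-HPE sequences for T with parameter σ < 1, distance generating function w ∈ 𝒟_Z(m,M), and initial point z₀ ∈ Z, set r_k := (1/λ_k)(∇w(z_{k−1}) − ∇w(z_k)), τ := √2·M/√m and (dw)_0 := inf{(dw)_{z₀}(z*) : 0 ∈ T(z*)}. Then for every k ≥ 1 there exists an index i ≤ k such that ‖r_i‖_* ≤ τ(1+√σ) √( (dw)_0 / ((1−σ) Σ_{j=1}^{k} λ_j²) ) and ε_i ≤ σ(dw)_0 λ_i / ((1−σ) Σ_{j=1}^{k} λ_j²). -/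

import Mathlib

/-!
For a zero `x` of `T`, the three-point identity for Bregman distances and the error criterion show
that `(dw)_{z_k}(x)` drops by at least `(1 - σ) (dw)_{z_{k-1}}(z̃_k)` at step `k`, so these gaps sum
to at most `(dw)_0 / (1 - σ)`. By the mediant inequality some step `i ≤ k` has a gap at most
`λ_i² (dw)_0 / ((1 - σ) ∑ λ_j²)`. This gap controls `λ_i ε_i` through the error criterion, and, by
strong convexity at `z_{i-1}` and `z_i`, the distance between these points, hence `λ_i ‖r_i‖_*`
through the Lipschitz bound on `∇w`.
-/

open RealInnerProductSpace Filter

/-- The dual (extended) seminorm of a seminorm `p`: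
`‖v‖_* = sup { ⟪v, z⟫ : p z ≤ 1 }`, valued in `[-∞, ∞]`. -/
noncomputable def dualSN {E : Type*} [NormedAddCommGroup E] [InnerProductSpace ℝ E]
    (p : E → ℝ) (v : E) : EReal :=
  ⨆ z : {z : E // p z ≤ 1}, ((⟪v, z.1⟫ : ℝ) : EReal)

/-- The Bregman distance `(dw)_z(z') := w(z') - w(z) - ⟪∇w(z), z' - z⟫`
associated with `w`, whose gradient is `gw`. -/
noncomputable def breg {E : Type*} [NormedAddCommGroup E] [InnerProductSpace ℝ E]
    (w : E → ℝ) (gw : E → E) (z z' : E) : ℝ :=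
  w z' - w z - ⟪gw z, z' - z⟫

/-- `w ∈ 𝒟_Z(m, M)`: `w` is differentiable on `Z` with gradient `gw`, is `m`-strongly
convex with respect to the seminorm `p` on `Z`, and `gw` is `M`-Lipschitz from `p` to the
dual seminorm of `p` on `Z`. -/
structure IsDGF {E : Type*} [NormedAddCommGroup E] [InnerProductSpace ℝ E]
    [FiniteDimensional ℝ E]
    (Z : Set E) (p : Seminorm ℝ E) (m M : ℝ) (w : E → ℝ) (gw : E → E) : Prop where
  diff : ∀ z ∈ Z, HasGradientAt w (gw z) z
  strconv : ∀ z ∈ Z, ∀ z' ∈ Z, m / 2 * (p (z - z'))^2 ≤ w z' - w z - ⟪gw z, z' - z⟫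
  lips : ∀ z ∈ Z, ∀ z' ∈ Z, dualSN ⇑p (gw z - gw z') ≤ ((M * p (z - z') : ℝ) : EReal)

/-- A set-valued operator `T : E ⇉ E` is monotone. -/
def MonoOp {E : Type*} [NormedAddCommGroup E] [InnerProductSpace ℝ E]
    (T : E → Set E) : Prop :=
  ∀ z z' t t' : E, t ∈ T z → t' ∈ T z' → 0 ≤ ⟪z - z', t - t'⟫

/-- A set-valued operator `T : E ⇉ E` is maximal monotone. -/
def MaxMonoOp {E : Type*} [NormedAddCommGroup E] [InnerProductSpace ℝ E]
    (T : E → Set E) : Prop :=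
  MonoOp T ∧ ∀ T' : E → Set E, MonoOp T' → (∀ z, T z ⊆ T' z) → T' = T

/-- The ε-enlargement `T^[ε]` of a monotone operator `T`. -/
def epsEnl {E : Type*} [NormedAddCommGroup E] [InnerProductSpace ℝ E]
    (T : E → Set E) (ε : ℝ) (z : E) : Set E :=
  {t | ∀ z' t' : E, t' ∈ T z' → -ε ≤ ⟪t - t', z - z'⟫}

/-- NE-HPE sequences `(λ_k, z_k, z̃_k, ε_k)` for `T`, with parameter `σ`, distance
generating function `w` (with gradient `gw`) and initial point `z_0 = zs 0 ∈ Z`. -/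
structure NEHPE {E : Type*} [NormedAddCommGroup E] [InnerProductSpace ℝ E]
    (Z : Set E) (w : E → ℝ) (gw : E → E) (T : E → Set E) (σ : ℝ)
    (lam : ℕ → ℝ) (zs : ℕ → E) (zt : ℕ → E) (ε : ℕ → ℝ) : Prop where
  lam_pos : ∀ k, 1 ≤ k → 0 < lam k
  zs_mem : ∀ k, zs k ∈ Z
  zt_mem : ∀ k, 1 ≤ k → zt k ∈ Z
  eps_nonneg : ∀ k, 1 ≤ k → 0 ≤ ε k
  incl : ∀ k, 1 ≤ k → (1 / lam k) • (gw (zs (k-1)) - gw (zs k)) ∈ epsEnl T (ε k) (zt k)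
  err : ∀ k, 1 ≤ k →
    breg w gw (zs k) (zt k) + lam k * ε k ≤ σ * breg w gw (zs (k-1)) (zt k)

lemma exists_div_le_sum_div_sum {ι 𝕜 : Type*} [Field 𝕜] [LinearOrder 𝕜] [IsStrictOrderedRing 𝕜]
    {s : Finset ι} (hs : s.Nonempty) (f : ι → 𝕜) {c : ι → 𝕜} (hc : ∀ i ∈ s, 0 < c i) :
    ∃ i ∈ s, f i / c i ≤ (∑ j ∈ s, f j) / ∑ j ∈ s, c j := by
  have hsum : 0 < ∑ j ∈ s, c j := Finset.sum_pos hc hs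
  obtain ⟨i, hi, hle⟩ : ∃ i ∈ s, f i ≤ (∑ j ∈ s, f j) / (∑ j ∈ s, c j) * c i := by
    apply Finset.exists_le_of_sum_le hs
    rw [← Finset.mul_sum, div_mul_cancel₀ _ hsum.ne']
  exact ⟨i, hi, (div_le_iff₀ (hc i hi)).2 hle⟩

lemma le_sqrt_two_div_sqrt_mul_sqrt {m x b : ℝ} (hm : 0 < m) (h : m / 2 * x ^ 2 ≤ b) :
    x ≤ √2 / √m * √b := by
  rw [← Real.sqrt_div zero_le_two, ← Real.sqrt_mul (by positivity)]
  apply Real.le_sqrt_of_sq_le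
  rw [div_mul_eq_mul_div, le_div_iff₀ hm]
  linarith

section InnerProductSpace

variable {E : Type*} [NormedAddCommGroup E] [InnerProductSpace ℝ E]

lemma dualSN_le_coe_iff {p : E → ℝ} {v : E} {c : ℝ} :
    dualSN p v ≤ c ↔ ∀ z, p z ≤ 1 → ⟪v, z⟫ ≤ c := by
  simp only [dualSN, iSup_le_iff, EReal.coe_le_coe_iff, Subtype.forall]

lemma dualSN_smul_le {p : E → ℝ} {v : E} {a c : ℝ} (ha : 0 ≤ a) (h : dualSN p v ≤ c) :
    dualSN p (a • v) ≤ (a * c : ℝ) := by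
  rw [dualSN_le_coe_iff] at h ⊢
  intro z hz
  rw [real_inner_smul_left]
  exact mul_le_mul_of_nonneg_left (h z hz) ha

lemma breg_sub_breg (w : E → ℝ) (gw : E → E) (a b x y : E) :
    breg w gw a x - breg w gw b x =
      breg w gw a y - breg w gw b y + ⟪gw a - gw b, y - x⟫ := by
  simp only [breg, inner_sub_left, inner_sub_right]
  ring

namespace NEHPE

variable {Z : Set E} {w : E → ℝ} {gw : E → E} {T : E → Set E} {σ : ℝ}
  {lam : ℕ → ℝ} {zs zt : ℕ → E} {ε : ℕ → ℝ}

lemma neg_lam_mul_eps_le_inner (h : NEHPE Z w gw T σ lam zs zt ε) {x : E} (hx : 0 ∈ T x)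
    {k : ℕ} (hk : 1 ≤ k) :
    -(lam k * ε k) ≤ ⟪gw (zs (k - 1)) - gw (zs k), zt k - x⟫ := by
  have hmem := h.incl k hk x 0 hx
  rwa [sub_zero, real_inner_smul_left, one_div, le_inv_mul_iff₀ (h.lam_pos k hk), mul_neg] at hmem

lemma one_sub_mul_breg_le (h : NEHPE Z w gw T σ lam zs zt ε) {x : E} (hx : 0 ∈ T x)
    {k : ℕ} (hk : 1 ≤ k) :
    (1 - σ) * breg w gw (zs (k - 1)) (zt k) ≤
      breg w gw (zs (k - 1)) x - breg w gw (zs k) x := by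
  have hinner := h.neg_lam_mul_eps_le_inner hx hk
  have herr := h.err k hk
  rw [breg_sub_breg w gw _ _ x (zt k)]
  linarith

lemma one_sub_mul_sum_breg_le (h : NEHPE Z w gw T σ lam zs zt ε) {x : E} (hx : 0 ∈ T x)
    (n : ℕ) :
    (1 - σ) * ∑ j ∈ Finset.Icc 1 n, breg w gw (zs (j - 1)) (zt j) ≤
      breg w gw (zs 0) x - breg w gw (zs n) x := by
  induction n with
  | zero => simp
  | succ n ih =>
    have hstep := h.one_sub_mul_breg_le hx n.succ_pos
    rw [Nat.succ_eq_add_one, Nat.add_sub_cancel] at hstep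
    rw [Finset.sum_Icc_succ_top n.succ_pos, mul_add, Nat.add_sub_cancel]
    linarith

lemma one_sub_mul_sum_breg_le_sInf (h : NEHPE Z w gw T σ lam zs zt ε)
    (hsol : ∃ z, 0 ∈ T z) {n : ℕ} (hbreg : ∀ x, 0 ∈ T x → 0 ≤ breg w gw (zs n) x) :
    (1 - σ) * ∑ j ∈ Finset.Icc 1 n, breg w gw (zs (j - 1)) (zt j) ≤
      sInf (breg w gw (zs 0) '' {z | 0 ∈ T z}) := by
  refine le_csInf (Set.Nonempty.image _ hsol) ?_
  rintro _ ⟨x, hx, rfl⟩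
  exact (h.one_sub_mul_sum_breg_le hx n).trans (sub_le_self _ (hbreg x hx))

lemma exists_breg_div_lam_sq_le (h : NEHPE Z w gw T σ lam zs zt ε) (hσ : σ < 1)
    (hsol : ∃ z, 0 ∈ T z) {k : ℕ} (hbreg : ∀ x, 0 ∈ T x → 0 ≤ breg w gw (zs k) x) (hk : 1 ≤ k) :
    ∃ i, 1 ≤ i ∧ i ≤ k ∧ breg w gw (zs (i - 1)) (zt i) / lam i ^ 2 ≤
      sInf (breg w gw (zs 0) '' {z | 0 ∈ T z}) /
        ((1 - σ) * ∑ j ∈ Finset.Icc 1 k, lam j ^ 2) := by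
  have hlam : ∀ j ∈ Finset.Icc 1 k, 0 < lam j ^ 2 := fun j hj ↦
    pow_pos (h.lam_pos j (Finset.mem_Icc.1 hj).1) 2
  obtain ⟨i, hi, hle⟩ := exists_div_le_sum_div_sum (Finset.nonempty_Icc.2 hk)
    (fun j ↦ breg w gw (zs (j - 1)) (zt j)) hlam
  obtain ⟨hi1, hik⟩ := Finset.mem_Icc.1 hi
  refine ⟨i, hi1, hik, hle.trans ?_⟩
  rw [← div_div]
  refine div_le_div_of_nonneg_right ?_ (Finset.sum_nonneg fun j hj ↦ (hlam j hj).le)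
  rw [le_div_iff₀' (sub_pos.2 hσ)]
  exact h.one_sub_mul_sum_breg_le_sInf hsol hbreg

lemma eps_le (h : NEHPE Z w gw T σ lam zs zt ε) {k : ℕ} (hk : 1 ≤ k)
    (hbreg : 0 ≤ breg w gw (zs k) (zt k)) :
    ε k ≤ σ * lam k * (breg w gw (zs (k - 1)) (zt k) / lam k ^ 2) := by
  have hlam := h.lam_pos k hk
  have herr : lam k * ε k ≤ σ * breg w gw (zs (k - 1)) (zt k) := by
    linarith [h.err k hk]
  calc
    ε k ≤ σ * breg w gw (zs (k - 1)) (zt k) / lam k := (le_div_iff₀' hlam).2 herr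
    _ = σ * lam k * (breg w gw (zs (k - 1)) (zt k) / lam k ^ 2) := by field_simp

variable {p : Seminorm ℝ E} {m M : ℝ}

lemma seminorm_sub_le (h : NEHPE Z w gw T σ lam zs zt ε) (hm : 0 < m) (hσ : 0 ≤ σ)
    (hsc : ∀ z ∈ Z, ∀ z' ∈ Z, m / 2 * p (z - z') ^ 2 ≤ breg w gw z z')
    {k : ℕ} (hk : 1 ≤ k) :
    p (zs (k - 1) - zs k) ≤
      √2 / √m * (1 + √σ) * √(breg w gw (zs (k - 1)) (zt k)) := by
  set b := breg w gw (zs (k - 1)) (zt k)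
  have hbreg : breg w gw (zs k) (zt k) ≤ σ * b := by
    linarith [h.err k hk, mul_nonneg (h.lam_pos k hk).le (h.eps_nonneg k hk)]
  have hprev : p (zs (k - 1) - zt k) ≤ √2 / √m * √b :=
    le_sqrt_two_div_sqrt_mul_sqrt hm (hsc _ (h.zs_mem _) _ (h.zt_mem k hk))
  have hnext : p (zs k - zt k) ≤ √2 / √m * √(σ * b) :=
    le_sqrt_two_div_sqrt_mul_sqrt hm ((hsc _ (h.zs_mem k) _ (h.zt_mem k hk)).trans hbreg)
  calc
    p (zs (k - 1) - zs k) = p (zs (k - 1) - zt k - (zs k - zt k)) := by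
      rw [sub_sub_sub_cancel_right]
    _ ≤ p (zs (k - 1) - zt k) + p (zs k - zt k) := map_sub_le_add p _ _
    _ ≤ √2 / √m * √b + √2 / √m * √(σ * b) := add_le_add hprev hnext
    _ = √2 / √m * (1 + √σ) * √b := by
      rw [Real.sqrt_mul hσ]
      ring

lemma dualSN_residual_le (h : NEHPE Z w gw T σ lam zs zt ε) (hm : 0 < m) (hM : 0 ≤ M)
    (hσ : 0 ≤ σ)
    (hsc : ∀ z ∈ Z, ∀ z' ∈ Z, m / 2 * p (z - z') ^ 2 ≤ breg w gw z z')
    (hlip : ∀ z ∈ Z, ∀ z' ∈ Z, dualSN p (gw z - gw z') ≤ (M * p (z - z') : ℝ))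
    {k : ℕ} (hk : 1 ≤ k) :
    dualSN p ((1 / lam k) • (gw (zs (k - 1)) - gw (zs k))) ≤
      (√2 * M / √m * (1 + √σ) * √(breg w gw (zs (k - 1)) (zt k) / lam k ^ 2) : ℝ) := by
  have hlam := h.lam_pos k hk
  refine (dualSN_smul_le (one_div_pos.2 hlam).le
    (hlip _ (h.zs_mem (k - 1)) _ (h.zs_mem k))).trans (EReal.coe_le_coe ?_)
  calc
    1 / lam k * (M * p (zs (k - 1) - zs k)) ≤
        1 / lam k * (M * (√2 / √m * (1 + √σ) * √(breg w gw (zs (k - 1)) (zt k)))) := by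
      gcongr
      exact h.seminorm_sub_le hm hσ hsc hk
    _ = √2 * M / √m * (1 + √σ) * √(breg w gw (zs (k - 1)) (zt k) / lam k ^ 2) := by
      rw [Real.sqrt_div' _ (sq_nonneg _), Real.sqrt_sq hlam.le]
      ring

end NEHPE

theorem stmt7_general (Z : Set E) (p : Seminorm ℝ E) (m M : ℝ) (hm : 0 < m) (hM : 0 ≤ M)
    (w : E → ℝ) (gw : E → E) (hgw : ∀ z ∈ Z, HasFDerivAt w (innerSL ℝ (gw z)) z)
    (hsc : ∀ z ∈ Z, ∀ z' ∈ Z, m / 2 * p (z - z') ^ 2 ≤ breg w gw z z')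
    (hlip : ∀ z ∈ Z, ∀ z' ∈ Z, dualSN p (gw z - gw z') ≤ (M * p (z - z') : ℝ))
    (T : E → Set E) (hdom : ∀ z, 0 ∈ T z → z ∈ Z) (hsol : ∃ z, 0 ∈ T z)
    (σ : ℝ) (hσ0 : 0 ≤ σ) (hσ1 : σ < 1) (lam : ℕ → ℝ) (zs zt : ℕ → E) (ε : ℕ → ℝ)
    (hseq : NEHPE Z w gw T σ lam zs zt ε)
    (r : ℕ → E) (hr : ∀ k, r k = (1 / lam k) • (gw (zs (k - 1)) - gw (zs k)))
    (τ : ℝ) (hτ : τ = √2 * M / √m)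
    (dw0 : ℝ) (hdw0 : dw0 = sInf (breg w gw (zs 0) '' {z | 0 ∈ T z})) (k : ℕ) (hk : 1 ≤ k) :
    ∃ i, 1 ≤ i ∧ i ≤ k ∧
      dualSN p (r i) ≤
        (τ * (1 + √σ) * √(dw0 / ((1 - σ) * ∑ j ∈ Finset.Icc 1 k, lam j ^ 2)) : ℝ) ∧
      ε i ≤ σ * dw0 * lam i / ((1 - σ) * ∑ j ∈ Finset.Icc 1 k, lam j ^ 2) := by
  have hbreg : ∀ z ∈ Z, ∀ z' ∈ Z, 0 ≤ breg w gw z z' := fun z hz z' hz' ↦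
    le_trans (by positivity) (hsc z hz z' hz')
  obtain ⟨i, hi, hik, hgap⟩ := hseq.exists_breg_div_lam_sq_le hσ1 hsol
    (fun x hx ↦ hbreg _ (hseq.zs_mem k) x (hdom x hx)) hk
  rw [← hdw0] at hgap
  have hlam := hseq.lam_pos i hi
  refine ⟨i, hi, hik, ?_, ?_⟩
  · rw [hr, hτ]
    refine (hseq.dualSN_residual_le hm hM hσ0 hsc hlip hi).trans (EReal.coe_le_coe ?_)
    gcongr
  · calc
      ε i ≤ σ * lam i * (breg w gw (zs (i - 1)) (zt i) / lam i ^ 2) :=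
        hseq.eps_le hi (hbreg _ (hseq.zs_mem i) _ (hseq.zt_mem i hi))
      _ ≤ σ * lam i * (dw0 / ((1 - σ) * ∑ j ∈ Finset.Icc 1 k, lam j ^ 2)) := by gcongr
      _ = σ * dw0 * lam i / ((1 - σ) * ∑ j ∈ Finset.Icc 1 k, lam j ^ 2) := by ring

end InnerProductSpace

/-- Pointwise convergence: square-summed bound (σ < 1). -/
theorem stmt7
    {E : Type*} [NormedAddCommGroup E] [InnerProductSpace ℝ E] [FiniteDimensional ℝ E]
    (Z : Set E) (p : Seminorm ℝ E) (m M : ℝ) (hm : 0 < m) (hmM : m ≤ M)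
    (w : E → ℝ) (gw : E → E) (hw : IsDGF Z p m M w gw)
    (T : E → Set E) (hT : MaxMonoOp T)
    (hdom : ∀ z, (T z).Nonempty → z ∈ Z) (hsol : ∃ z, 0 ∈ T z)
    (σ : ℝ) (hσ0 : 0 ≤ σ) (hσ1 : σ ≤ 1)
    (lam : ℕ → ℝ) (zs zt : ℕ → E) (ε : ℕ → ℝ)
    (hseq : NEHPE Z w gw T σ lam zs zt ε)
    (r : ℕ → E) (hr : ∀ k, r k = (1 / lam k) • (gw (zs (k - 1)) - gw (zs k)))
    (hσlt : σ < 1)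
    (τ : ℝ) (hτ : τ = Real.sqrt 2 * M / Real.sqrt m)
    (dw0 : ℝ) (hdw0 : dw0 = sInf (breg w gw (zs 0) '' {z | (0 : E) ∈ T z})) :
    ∀ k : ℕ, 1 ≤ k → ∃ i, 1 ≤ i ∧ i ≤ k ∧
      dualSN ⇑p (r i)
        ≤ ((τ * (1 + Real.sqrt σ) *
            Real.sqrt (dw0 / ((1 - σ) * ∑ j ∈ Finset.Icc 1 k, lam j ^ 2)) : ℝ) : EReal)
      ∧ ε i ≤ σ * dw0 * lam i / ((1 - σ) * ∑ j ∈ Finset.Icc 1 k, lam j ^ 2) :=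
  stmt7_general Z p m M hm (hm.le.trans hmM) w gw (fun z hz ↦ (hw.diff z hz).hasFDerivAt)
    hw.strconv hw.lips T (fun z hz ↦ hdom z ⟨0, hz⟩) hsol σ hσ0 hσlt lam zs zt ε hseq r hr
    τ hτ dw0 hdw0
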